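/- arXiv:math/0202288 — 5 statements merged into one kernel-verified Lean document; each statement's English description precedes it below -/
import Mathlib

section
/- The polynomials φ(τ² − ρσ₂), φ(τσ₃) and φ(ρσ₃) lie in the ideal J = (q₁ℓ₁, q₂ℓ₂, q₃ℓ₃) of P, so that φ induces a ℂ-algebra homomorphism ℂ[b,σ₁,ρ,σ₂,τ,σ₃]/(τ²−ρσ₂, τσ₃, ρσ₃) → P/J; this induced homomorphism is injective. -/
open MvPolynomial

noncomputable section

/-- `R = ℂ[b,σ₁,ρ,σ₂,τ,σ₃]`, with variables `0 = b`, `1 = σ₁`, `2 = ρ`, `3 = σ₂`,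
`4 = τ`, `5 = σ₃`. -/
abbrev R6 : Type := MvPolynomial (Fin 6) ℂ

/-- `P = ℂ[b,q₁,q₂,q₃,ℓ₁,ℓ₂,ℓ₃]`, with variables `0 = b`, `1 = q₁`, `2 = q₂`, `3 = q₃`,
`4 = ℓ₁`, `5 = ℓ₂`, `6 = ℓ₃`. -/
abbrev P7 : Type := MvPolynomial (Fin 7) ℂ

def ρ : R6 := X 2
def σ₂ : R6 := X 3
def τ : R6 := X 4
def σ₃ : R6 := X 5

/-- The `ℂ`-algebra homomorphism `φ : ℂ[b,σ₁,ρ,σ₂,τ,σ₃] → ℂ[b,q₁,q₂,q₃,ℓ₁,ℓ₂,ℓ₃]` with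
`φ(b) = b`, `φ(σ₁) = ℓ₁+ℓ₂+ℓ₃`, `φ(ρ) = q₁²+q₂²+q₃²−2(q₁q₂+q₁q₃+q₂q₃)`,
`φ(σ₂) = ℓ₁²+ℓ₂²+ℓ₃²−2(ℓ₁ℓ₂+ℓ₁ℓ₃+ℓ₂ℓ₃)`, `φ(τ) = ℓ₁(q₃−q₂)+ℓ₂(q₁−q₃)+ℓ₃(q₂−q₁)`,
`φ(σ₃) = ℓ₁ℓ₂ℓ₃`. -/
def φ : R6 →ₐ[ℂ] P7 :=
  aeval ![X 0,
    X 4 + X 5 + X 6,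
    X 1 ^ 2 + X 2 ^ 2 + X 3 ^ 2 - 2 * (X 1 * X 2 + X 1 * X 3 + X 2 * X 3),
    X 4 ^ 2 + X 5 ^ 2 + X 6 ^ 2 - 2 * (X 4 * X 5 + X 4 * X 6 + X 5 * X 6),
    X 4 * (X 3 - X 2) + X 5 * (X 1 - X 3) + X 6 * (X 2 - X 1),
    X 4 * X 5 * X 6]

/-- The ideal `J = (q₁ℓ₁, q₂ℓ₂, q₃ℓ₃)` of `P`. -/
def J : Ideal P7 := Ideal.span {X 1 * X 4, X 2 * X 5, X 3 * X 6}

/-- The ideal `(τ²−ρσ₂, τσ₃, ρσ₃)` of `R`. -/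
def I : Ideal R6 := Ideal.span {τ ^ 2 - ρ * σ₂, τ * σ₃, ρ * σ₃}

theorem mem_J_of_eq {f : P7} (a₁ a₂ a₃ : P7)
    (h : f = a₁ * (X 1 * X 4) + a₂ * (X 2 * X 5) + a₃ * (X 3 * X 6)) : f ∈ J := by
  rw [h]
  refine J.add_mem (J.add_mem ?_ ?_) ?_ <;>
    exact J.mul_mem_left _ (Ideal.subset_span (by simp))

theorem φ_relation_mem_J : φ (τ ^ 2 - ρ * σ₂) ∈ J := by
  refine mem_J_of_eq
    (-2 * X 3 * X 5 - 6 * X 3 * X 6 - 6 * X 2 * X 5 - 2 * X 2 * X 6 - X 1 * X 4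
      + 2 * X 1 * X 5 + 2 * X 1 * X 6 + 2 * X 2 * X 4 + 2 * X 3 * X 4)
    (-2 * X 3 * X 4 - 2 * X 1 * X 6 - 6 * X 3 * X 6 - X 2 * X 5
      + 2 * X 2 * X 4 + 2 * X 2 * X 6 + 2 * X 1 * X 5 + 2 * X 3 * X 5)
    (-2 * X 2 * X 4 - 2 * X 1 * X 5 - X 3 * X 6
      + 2 * X 3 * X 4 + 2 * X 3 * X 5 + 2 * X 1 * X 6 + 2 * X 2 * X 6) ?_
  simp [φ, τ, ρ, σ₂]
  ring

theorem φ_τ_mul_σ₃_mem_J : φ (τ * σ₃) ∈ J := by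
  refine mem_J_of_eq (X 5 * X 6 * (X 5 - X 6)) (X 4 * X 6 * (X 6 - X 4))
    (X 4 * X 5 * (X 4 - X 5)) ?_
  simp [φ, τ, σ₃]
  ring

theorem φ_ρ_mul_σ₃_mem_J : φ (ρ * σ₃) ∈ J := by
  refine mem_J_of_eq (X 5 * X 6 * (X 1 - 2 * X 2 - 2 * X 3)) (X 4 * X 6 * (X 2 - 2 * X 3))
    (X 4 * X 5 * X 3) ?_
  simp [φ, ρ, σ₃]
  ring

theorem eval_eq_zero_of_mem_J {f : P7} (hf : f ∈ J) {d : Fin 7 → ℂ}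
    (h₁ : d 1 * d 4 = 0) (h₂ : d 2 * d 5 = 0) (h₃ : d 3 * d 6 = 0) : eval d f = 0 := by
  have hle : J ≤ RingHom.ker (eval d) := by
    rw [J, Ideal.span_le]
    rintro _ (rfl | rfl | rfl) <;>
      simpa only [SetLike.mem_coe, RingHom.mem_ker, map_mul, eval_X]
  exact hle hf

theorem eval_φ (d : Fin 7 → ℂ) (x : R6) :
    eval d (φ x) = eval ![d 0,
      d 4 + d 5 + d 6,
      d 1 ^ 2 + d 2 ^ 2 + d 3 ^ 2 - 2 * (d 1 * d 2 + d 1 * d 3 + d 2 * d 3),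
      d 4 ^ 2 + d 5 ^ 2 + d 6 ^ 2 - 2 * (d 4 * d 5 + d 4 * d 6 + d 5 * d 6),
      d 4 * (d 3 - d 2) + d 5 * (d 1 - d 3) + d 6 * (d 2 - d 1),
      d 4 * d 5 * d 6] x := by
  induction x using MvPolynomial.induction_on with
  | C a => simp [φ, algebraMap_eq]
  | add p q hp hq => simp only [map_add, hp, hq]
  | mul_X p i hp =>
    rw [map_mul, map_mul, hp, map_mul]
    congr 1
    fin_cases i <;> simp [φ]

/-- Over `ℂ` a monic cubic splits: any triple of elementary symmetric values is attained. -/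
theorem exists_elementary_symmetric_eq (e₁ e₂ e₃ : ℂ) :
    ∃ u v w : ℂ, u + v + w = e₁ ∧ u * v + u * w + v * w = e₂ ∧ u * v * w = e₃ := by
  obtain ⟨u, hu⟩ := IsAlgClosed.exists_root
    (Polynomial.X ^ 3 + (Polynomial.C (-e₁) * Polynomial.X ^ 2 + Polynomial.C e₂ * Polynomial.X
      + Polynomial.C (-e₃)) : Polynomial ℂ) (by
        have : (Polynomial.X ^ 3 + (Polynomial.C (-e₁) * Polynomial.X ^ 2
          + Polynomial.C e₂ * Polynomial.X + Polynomial.C (-e₃)) : Polynomial ℂ).degree = 3 := by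
          compute_degree!
        rw [this]
        decide)
  simp only [Polynomial.IsRoot, Polynomial.eval_add, Polynomial.eval_mul, Polynomial.eval_pow,
    Polynomial.eval_X, Polynomial.eval_C] at hu
  obtain ⟨r, hr⟩ := IsAlgClosed.exists_eq_mul_self ((e₁ - u) ^ 2 - 4 * (e₂ - u * (e₁ - u)))
  refine ⟨u, (e₁ - u + r) / 2, (e₁ - u - r) / 2, by ring, ?_, ?_⟩
  · linear_combination hr / 4
  · linear_combination u * hr / 4 + hu

theorem eval_eq_zero_of_ρ_τ_eq_zero {x : R6} (hx : φ x ∈ J) (c : Fin 6 → ℂ)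
    (hρ : c 2 = 0) (hτ : c 4 = 0) : eval c x = 0 := by
  obtain ⟨u, v, w, h₁, h₂, h₃⟩ :=
    exists_elementary_symmetric_eq (c 1) ((c 1 ^ 2 - c 3) / 4) (c 5)
  have h := eval_eq_zero_of_mem_J hx (d := ![c 0, 0, 0, 0, u, v, w])
    (by simp) (by simp) (by simp)
  rw [eval_φ] at h
  convert h using 3
  ext i
  fin_cases i <;> simp [hρ, hτ, h₁, h₃]
  linear_combination 4 * h₂ - (u + v + w + c 1) * h₁

theorem eval_eq_zero_of_σ₃_eq_zero {x : R6} (hx : φ x ∈ J) (c : Fin 6 → ℂ)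
    (hσ₃ : c 5 = 0) (hτ : c 4 ^ 2 = c 2 * c 3) : eval c x = 0 := by
  obtain ⟨w, hw⟩ := IsAlgClosed.exists_eq_mul_self (c 2)
  obtain ⟨v, hv, hwv⟩ : ∃ v, c 3 = v * v ∧ c 4 = w * v := by
    obtain ⟨v, hv⟩ := IsAlgClosed.exists_eq_mul_self (c 3)
    have hsq : c 4 ^ 2 = (w * v) ^ 2 := by rw [hτ, hw, hv]; ring
    rcases sq_eq_sq_iff_eq_or_eq_neg.mp hsq with h | h
    · exact ⟨v, hv, h⟩
    · exact ⟨-v, by rw [hv]; ring, by rw [h]; ring⟩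
  have h := eval_eq_zero_of_mem_J hx
    (d := ![c 0, 0, 0, w, (c 1 + v) / 2, (c 1 - v) / 2, 0]) (by simp) (by simp) (by simp)
  rw [eval_φ] at h
  convert h using 3
  ext i
  fin_cases i <;> simp [hσ₃, hw, hv, hwv] <;> ring

/-- The substitution `ρ = τ = 0`. -/
def killρτ : R6 →ₐ[ℂ] R6 := aeval ![X 0, X 1, 0, X 3, 0, X 5]

theorem sub_killρτ_mem (x : R6) : x - killρτ x ∈ Ideal.span {ρ, τ} := by
  have hX : ∀ i, X i - killρτ (X i) ∈ Ideal.span {ρ, τ} := by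
    intro i
    fin_cases i <;> simp [killρτ] <;> exact Ideal.subset_span (by simp [ρ, τ])
  induction x using MvPolynomial.induction_on with
  | C a => simp [killρτ, algebraMap_eq]
  | add p q hp hq =>
    rw [map_add, add_sub_add_comm]
    exact add_mem hp hq
  | mul_X p i hp =>
    have : p * X i - killρτ (p * X i) =
        X i * (p - killρτ p) + killρτ p * (X i - killρτ (X i)) := by rw [map_mul]; ring
    rw [this]
    exact add_mem (Ideal.mul_mem_left _ _ hp) (Ideal.mul_mem_left _ _ (hX i))

theorem eval_killρτ (c : Fin 6 → ℂ) (x : R6) :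
    eval c (killρτ x) = eval ![c 0, c 1, 0, c 3, 0, c 5] x := by
  induction x using MvPolynomial.induction_on with
  | C a => simp [killρτ, algebraMap_eq]
  | add p q hp hq => simp only [map_add, hp, hq]
  | mul_X p i hp =>
    rw [map_mul, map_mul, hp, map_mul]
    congr 1
    fin_cases i <;> simp [killρτ]

theorem killρτ_eq_zero {x : R6} (hx : φ x ∈ J) : killρτ x = 0 := by
  refine MvPolynomial.funext fun c => ?_
  rw [eval_killρτ, map_zero]
  exact eval_eq_zero_of_ρ_τ_eq_zero hx _ (by simp) (by simp)

/-- The substitution `τ = σ₃ = 0`. -/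
def killτσ₃ : R6 →ₐ[ℂ] R6 := aeval ![X 0, X 1, X 2, X 3, 0, 0]

theorem eval_killτσ₃ (c : Fin 6 → ℂ) (x : R6) :
    eval c (killτσ₃ x) = eval ![c 0, c 1, c 2, c 3, 0, 0] x := by
  induction x using MvPolynomial.induction_on with
  | C a => simp [killτσ₃, algebraMap_eq]
  | add p q hp hq => simp only [map_add, hp, hq]
  | mul_X p i hp =>
    rw [map_mul, map_mul, hp, map_mul]
    congr 1
    fin_cases i <;> simp [killτσ₃]

/-- Modulo `(σ₃, τ²−ρσ₂)` every polynomial has the form `p + τ q` with `p`, `q` free of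
`τ` and `σ₃`. -/
theorem exists_normal_form (x : R6) : ∃ p q : R6,
    x - (killτσ₃ p + τ * killτσ₃ q) ∈ Ideal.span {σ₃, τ ^ 2 - ρ * σ₂} := by
  have hσ₃ : σ₃ ∈ Ideal.span {σ₃, τ ^ 2 - ρ * σ₂} := Ideal.subset_span (by simp)
  have hτ : τ ^ 2 - ρ * σ₂ ∈ Ideal.span {σ₃, τ ^ 2 - ρ * σ₂} := Ideal.subset_span (by simp)
  induction x using MvPolynomial.induction_on with
  | C a => exact ⟨C a, 0, by simp [killτσ₃, algebraMap_eq]⟩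
  | add x y hx hy =>
    obtain ⟨p, q, h⟩ := hx
    obtain ⟨p', q', h'⟩ := hy
    refine ⟨p + p', q + q', ?_⟩
    convert add_mem h h' using 1
    simp only [map_add]
    ring
  | mul_X x i hx =>
    obtain ⟨p, q, h⟩ := hx
    have hmul := Ideal.mul_mem_left _ (X i) h
    by_cases h₄ : i = 4
    · subst h₄
      refine ⟨X 2 * X 3 * q, p, ?_⟩
      convert add_mem hmul (Ideal.mul_mem_left _ (killτσ₃ q) hτ) using 1
      have h₂ : killτσ₃ (X 2) = X 2 := by simp [killτσ₃]
      have h₃ : killτσ₃ (X 3) = X 3 := by simp [killτσ₃]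
      rw [map_mul, map_mul, h₂, h₃, τ, ρ, σ₂]
      ring
    by_cases h₅ : i = 5
    · subst h₅
      refine ⟨0, 0, ?_⟩
      rw [map_zero, mul_zero, add_zero, sub_zero]
      exact Ideal.mul_mem_left _ x hσ₃
    · have hi : killτσ₃ (X i) = X i := by
        fin_cases i <;> simp [killτσ₃] at h₄ h₅ ⊢
      refine ⟨p * X i, q * X i, ?_⟩
      convert hmul using 1
      rw [map_mul, map_mul, hi]
      ring

theorem mem_span_σ₃_relation {x : R6} (hx : φ x ∈ J) :
    x ∈ Ideal.span {σ₃, τ ^ 2 - ρ * σ₂} := by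
  obtain ⟨p, q, h⟩ := exists_normal_form x
  obtain ⟨a, b, hab⟩ := Ideal.mem_span_pair.mp h
  have key (c : Fin 6 → ℂ) (t : ℂ) (ht : t ^ 2 = c 2 * c 3) :
      eval c (killτσ₃ p) + t * eval c (killτσ₃ q) = 0 := by
    have hzero := eval_eq_zero_of_σ₃_eq_zero hx ![c 0, c 1, c 2, c 3, t, 0] (by simp) (by simpa)
    have heval := congrArg (eval ![c 0, c 1, c 2, c 3, t, 0]) hab
    simp only [map_add, map_sub, map_mul, hzero, eval_killτσ₃, σ₃, τ, ρ, σ₂, map_pow,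
      eval_X] at heval
    simp [ht] at heval
    rw [eval_killτσ₃, eval_killτσ₃]
    linear_combination heval
  have hp : killτσ₃ p = 0 := by
    refine MvPolynomial.funext fun c => ?_
    obtain ⟨t, ht⟩ := IsAlgClosed.exists_eq_mul_self (c 2 * c 3)
    have h₁ := key c t (by rw [ht]; ring)
    have h₂ := key c (-t) (by rw [ht]; ring)
    rw [map_zero]
    linear_combination (h₁ + h₂) / 2
  have hq : killτσ₃ q = 0 := by
    have hmul : X 2 * X 3 * killτσ₃ q = 0 := by
      refine MvPolynomial.funext fun c => ?_
      obtain ⟨t, ht⟩ := IsAlgClosed.exists_eq_mul_self (c 2 * c 3)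
      have h₁ := key c t (by rw [ht]; ring)
      rw [hp, map_zero, zero_add] at h₁
      simp only [map_mul, map_zero, eval_X]
      linear_combination t * h₁ + eval c (killτσ₃ q) * ht
    simpa using hmul
  simpa [hp, hq] using h

theorem mem_I_of_φ_mem_J {x : R6} (hx : φ x ∈ J) : x ∈ I := by
  obtain ⟨a, b, rfl⟩ := Ideal.mem_span_pair.mp (mem_span_σ₃_relation hx)
  have hkill : killρτ a = 0 := by
    simpa [killρτ, σ₃, τ, ρ, σ₂] using killρτ_eq_zero hx
  have ha := sub_killρτ_mem a
  rw [hkill, sub_zero] at ha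
  obtain ⟨r, s, rfl⟩ := Ideal.mem_span_pair.mp ha
  have hrel : τ ^ 2 - ρ * σ₂ ∈ I := Ideal.subset_span (by simp)
  have hτσ₃ : τ * σ₃ ∈ I := Ideal.subset_span (by simp)
  have hρσ₃ : ρ * σ₃ ∈ I := Ideal.subset_span (by simp)
  rw [add_mul, mul_assoc, mul_assoc]
  exact I.add_mem (I.add_mem (I.mul_mem_left _ hρσ₃) (I.mul_mem_left _ hτσ₃))
    (I.mul_mem_left _ hrel)

/-- The polynomials `φ(τ²−ρσ₂)`, `φ(τσ₃)` and `φ(ρσ₃)` lie in the ideal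
`J = (q₁ℓ₁, q₂ℓ₂, q₃ℓ₃)` of `P`, so that `φ` induces a `ℂ`-algebra homomorphism
`ℂ[b,σ₁,ρ,σ₂,τ,σ₃]/(τ²−ρσ₂, τσ₃, ρσ₃) → P/J`; this induced homomorphism is injective
(i.e. `φ x ∈ J` implies `x ∈ (τ²−ρσ₂, τσ₃, ρσ₃)`). -/
theorem stmt5 :
    (φ (τ ^ 2 - ρ * σ₂) ∈ J ∧ φ (τ * σ₃) ∈ J ∧ φ (ρ * σ₃) ∈ J) ∧
    (∀ x : R6, φ x ∈ J → x ∈ I) := by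
  exact ⟨⟨φ_relation_mem_J, φ_τ_mul_σ₃_mem_J, φ_ρ_mul_σ₃_mem_J⟩,
    fun _ hx => mem_I_of_φ_mem_J hx⟩

end
end

section
/- Grade R = ℂ[b,σ₁,ρ,σ₂,τ,σ₃] by deg b = deg σ₁ = 1, deg ρ = deg σ₂ = deg τ = 2, deg σ₃ = 3, so that the ideal (τ²−ρσ₂, τσ₃, ρσ₃) is homogeneous (its generators have degrees 4, 5, 5). Then the Hilbert series of the graded quotient satisfies (1−T)·(1−T²)²·(1−T³) · Σ_{p≥0} dim_ℂ( (R/(τ²−ρσ₂, τσ₃, ρσ₃))_p ) · T^p = 1 + T + 2T² + 2T³ + 2T⁴ in ℤ[[T]]. -/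
open MvPolynomial

noncomputable section

/-- The weights: `deg b = deg σ₁ = 1`, `deg ρ = deg σ₂ = deg τ = 2`, `deg σ₃ = 3`. -/
def w6 : Fin 6 → ℕ := ![1, 1, 2, 2, 2, 3]

/-- The degree-`p` homogeneous component of the graded quotient `R/I`: the image of the
space of weighted-homogeneous polynomials of degree `p` under the quotient map. -/
def comp6 (p : ℕ) : Submodule ℂ (R6 ⧸ I) :=
  (weightedHomogeneousSubmodule ℂ w6 p).map (Ideal.Quotient.mkₐ ℂ I).toLinearMap

/-- Exponents of the monomials outside the initial ideal `(τ², τσ₃, ρσ₃)`. -/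
def standardExponents : Set (Fin 6 →₀ ℕ) :=
  {m | m 4 ≤ 1 ∧ (m 5 = 0 ∨ (m 2 = 0 ∧ m 4 = 0))}

/-- The exponent obtained by replacing `τ²` by `ρσ₂` as often as possible. -/
def reduceExponent (m : Fin 6 →₀ ℕ) : Fin 6 →₀ ℕ :=
  Finsupp.equivFunOnFinite.symm ![m 0, m 1, m 2 + m 4 / 2, m 3 + m 4 / 2, m 4 % 2, m 5]

open Classical in
/-- The normal form of a polynomial modulo `I`. -/
def normalForm : R6 →ₗ[ℂ] R6 :=
  (basisMonomials (Fin 6) ℂ).constr ℂ fun m =>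
    if m 5 = 0 ∨ (m 2 = 0 ∧ m 4 = 0) then monomial (reduceExponent m) 1 else 0

open Classical in
lemma normalForm_monomial (m : Fin 6 →₀ ℕ) :
    normalForm (monomial m 1) =
      if m 5 = 0 ∨ (m 2 = 0 ∧ m 4 = 0) then monomial (reduceExponent m) 1 else 0 := by
  have h := (basisMonomials (Fin 6) ℂ).constr_basis ℂ (fun m =>
    if m 5 = 0 ∨ (m 2 = 0 ∧ m 4 = 0) then monomial (reduceExponent m) (1 : ℂ) else 0) m
  rwa [coe_basisMonomials] at h

lemma normalForm_monomial_of_mem {m : Fin 6 →₀ ℕ} (hm : m ∈ standardExponents) :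
    normalForm (monomial m 1) = monomial m 1 := by
  have h : reduceExponent m = m := by
    have := hm.1
    ext i
    fin_cases i <;> simp [reduceExponent] <;> omega
  rw [normalForm_monomial, if_pos hm.2, h]

lemma normalForm_mul_eq_zero {g : R6}
    (hg : ∀ m : Fin 6 →₀ ℕ, normalForm (monomial m 1 * g) = 0) (a : R6) :
    normalForm (a * g) = 0 := by
  induction a using MvPolynomial.induction_on' with
  | monomial m c =>
    have h : (monomial m c : R6) = c • monomial m 1 := by simp [smul_monomial]
    rw [h, smul_mul_assoc, map_smul, hg, smul_zero]
  | add p q hp hq => rw [add_mul, map_add, hp, hq, add_zero]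

lemma normalForm_eq_zero_of_mem {x : R6} (hx : x ∈ I) : normalForm x = 0 := by
  rw [I, Ideal.mem_span_insert] at hx
  obtain ⟨a, z, hz, rfl⟩ := hx
  obtain ⟨c, d, rfl⟩ := Ideal.mem_span_pair.mp hz
  have h₁ : normalForm (a * (τ ^ 2 - ρ * σ₂)) = 0 := by
    refine normalForm_mul_eq_zero (fun m => ?_) a
    have ht : (monomial m 1 : R6) * τ ^ 2 = monomial (m + Finsupp.single 4 2) 1 := by
      simp [τ, X_pow_eq_monomial, monomial_mul]
    have hr : (monomial m 1 : R6) * (ρ * σ₂) =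
        monomial (m + (Finsupp.single 2 1 + Finsupp.single 3 1)) 1 := by
      simp [ρ, σ₂, X, monomial_mul]
    rw [mul_sub, map_sub, ht, hr, normalForm_monomial, normalForm_monomial]
    by_cases h5 : m 5 = 0
    · have he : reduceExponent (m + Finsupp.single 4 2) =
          reduceExponent (m + (Finsupp.single 2 1 + Finsupp.single 3 1)) := by
        ext i
        fin_cases i <;> simp [reduceExponent] <;> omega
      simp [h5, he]
    · simp [h5]
  have h₂ : normalForm (c * (τ * σ₃)) = 0 := by
    refine normalForm_mul_eq_zero (fun m => ?_) c
    have ht : (monomial m 1 : R6) * (τ * σ₃) =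
        monomial (m + (Finsupp.single 4 1 + Finsupp.single 5 1)) 1 := by
      simp [τ, σ₃, X, monomial_mul]
    rw [ht, normalForm_monomial]
    simp
  have h₃ : normalForm (d * (ρ * σ₃)) = 0 := by
    refine normalForm_mul_eq_zero (fun m => ?_) d
    have ht : (monomial m 1 : R6) * (ρ * σ₃) =
        monomial (m + (Finsupp.single 2 1 + Finsupp.single 5 1)) 1 := by
      simp [ρ, σ₃, X, monomial_mul]
    rw [ht, normalForm_monomial]
    simp
  rw [map_add, map_add, h₁, h₂, h₃, add_zero, add_zero]

lemma weight_w6 (m : Fin 6 →₀ ℕ) :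
    Finsupp.weight w6 m = m 0 + m 1 + 2 * m 2 + 2 * m 3 + 2 * m 4 + 3 * m 5 := by
  rw [Finsupp.weight_apply, Finsupp.sum_fintype _ _ (by simp)]
  simp [Fin.sum_univ_six, w6]
  ring

lemma weight_reduceExponent (m : Fin 6 →₀ ℕ) :
    Finsupp.weight w6 (reduceExponent m) = Finsupp.weight w6 m := by
  simp [weight_w6, reduceExponent]
  omega

lemma monomial_eq_prod_X (m : Fin 6 →₀ ℕ) :
    (monomial m 1 : R6) =
      X 0 ^ m 0 * X 1 ^ m 1 * X 2 ^ m 2 * X 3 ^ m 3 * X 4 ^ m 4 * X 5 ^ m 5 := by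
  rw [monomial_eq, Finsupp.prod_fintype _ _ (by simp), Fin.prod_univ_six, C_1, one_mul]

lemma mk_τ_sq : Ideal.Quotient.mk I (X 4) ^ 2 =
    Ideal.Quotient.mk I (X 2) * Ideal.Quotient.mk I (X 3) := by
  rw [← map_pow, ← map_mul, Ideal.Quotient.eq]
  exact Ideal.subset_span (by simp [τ, ρ, σ₂])

lemma mk_τ_mul_σ₃ : Ideal.Quotient.mk I (X 4) * Ideal.Quotient.mk I (X 5) = 0 := by
  rw [← map_mul, Ideal.Quotient.eq_zero_iff_mem]
  exact Ideal.subset_span (by simp [τ, σ₃])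

lemma mk_ρ_mul_σ₃ : Ideal.Quotient.mk I (X 2) * Ideal.Quotient.mk I (X 5) = 0 := by
  rw [← map_mul, Ideal.Quotient.eq_zero_iff_mem]
  exact Ideal.subset_span (by simp [ρ, σ₃])

lemma mk_monomial_reduceExponent (m : Fin 6 →₀ ℕ) :
    Ideal.Quotient.mk I (monomial (reduceExponent m) 1) =
      Ideal.Quotient.mk I (monomial m 1) := by
  simp only [monomial_eq_prod_X, map_mul, map_pow]
  have h : Ideal.Quotient.mk I (X 4) ^ m 4 =
      (Ideal.Quotient.mk I (X 2) * Ideal.Quotient.mk I (X 3)) ^ (m 4 / 2) *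
        Ideal.Quotient.mk I (X 4) ^ (m 4 % 2) := by
    rw [← mk_τ_sq, ← pow_mul, ← pow_add, Nat.div_add_mod]
  rw [h]
  simp [reduceExponent]
  ring

lemma mk_monomial_eq_zero {m : Fin 6 →₀ ℕ} (hm : ¬ (m 5 = 0 ∨ (m 2 = 0 ∧ m 4 = 0))) :
    Ideal.Quotient.mk I (monomial m 1) = 0 := by
  simp only [monomial_eq_prod_X, map_mul, map_pow]
  push Not at hm
  obtain ⟨u, hu⟩ := Nat.exists_eq_succ_of_ne_zero hm.1
  by_cases h2 : m 2 = 0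
  · obtain ⟨t, ht⟩ := Nat.exists_eq_succ_of_ne_zero (hm.2 h2)
    rw [hu, ht, pow_succ, pow_succ]
    linear_combination (Ideal.Quotient.mk I (X 0) ^ m 0 * Ideal.Quotient.mk I (X 1) ^ m 1 *
      Ideal.Quotient.mk I (X 2) ^ m 2 * Ideal.Quotient.mk I (X 3) ^ m 3 *
      Ideal.Quotient.mk I (X 4) ^ t * Ideal.Quotient.mk I (X 5) ^ u) * mk_τ_mul_σ₃
  · obtain ⟨r, hr⟩ := Nat.exists_eq_succ_of_ne_zero h2
    rw [hu, hr, pow_succ, pow_succ]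
    linear_combination (Ideal.Quotient.mk I (X 0) ^ m 0 * Ideal.Quotient.mk I (X 1) ^ m 1 *
      Ideal.Quotient.mk I (X 2) ^ r * Ideal.Quotient.mk I (X 3) ^ m 3 *
      Ideal.Quotient.mk I (X 4) ^ m 4 * Ideal.Quotient.mk I (X 5) ^ u) * mk_ρ_mul_σ₃

/-- The classes of the standard monomials of weighted degree `p`. -/
def standardClass (p : ℕ) (m : {m // m ∈ standardExponents ∧ Finsupp.weight w6 m = p}) :
    R6 ⧸ I :=
  (Ideal.Quotient.mkₐ ℂ I).toLinearMap (monomial m.1 1)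

lemma linearIndependent_standardClass (p : ℕ) : LinearIndependent ℂ (standardClass p) := by
  have hli : LinearIndependent ℂ
      fun m : {m // m ∈ standardExponents ∧ Finsupp.weight w6 m = p} =>
        (monomial m.1 1 : R6) := by
    have h := (basisMonomials (Fin 6) ℂ).linearIndependent
    rw [coe_basisMonomials] at h
    exact h.comp _ Subtype.val_injective
  refine hli.map (f := (Ideal.Quotient.mkₐ ℂ I).toLinearMap) ?_
  rw [Submodule.disjoint_def]
  intro x hx hker
  have hfix : normalForm x = x := by
    refine (LinearMap.eqOn_span (f := normalForm) (g := LinearMap.id) ?_ hx)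
    rintro _ ⟨m, rfl⟩
    exact normalForm_monomial_of_mem m.2.1
  rw [← hfix]
  exact normalForm_eq_zero_of_mem (Ideal.Quotient.eq_zero_iff_mem.mp hker)

lemma span_standardClass (p : ℕ) :
    Submodule.span ℂ (Set.range (standardClass p)) = comp6 p := by
  apply le_antisymm
  · rw [Submodule.span_le]
    rintro _ ⟨m, rfl⟩
    exact Submodule.mem_map_of_mem (isWeightedHomogeneous_monomial _ _ _ m.2.2)
  · rw [comp6, Submodule.map_le_iff_le_comap]
    intro f hf
    rw [f.as_sum]
    refine Submodule.sum_mem _ fun m hm => ?_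
    have hw : Finsupp.weight w6 m = p := hf (mem_support_iff.mp hm)
    have hc : monomial m (coeff m f) = coeff m f • (monomial m 1 : R6) := by
      simp [smul_monomial]
    rw [hc]
    refine Submodule.smul_mem _ _ ?_
    change Ideal.Quotient.mk I (monomial m 1) ∈ Submodule.span ℂ (Set.range (standardClass p))
    by_cases h : m 5 = 0 ∨ (m 2 = 0 ∧ m 4 = 0)
    · rw [← mk_monomial_reduceExponent]
      refine Submodule.subset_span ⟨⟨reduceExponent m, ?_, ?_⟩, rfl⟩
      · simp [standardExponents, reduceExponent]
        omega
      · rw [weight_reduceExponent, hw]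
    · rw [mk_monomial_eq_zero h]
      exact Submodule.zero_mem _

/-- The generating function counting the exponents in `A` by weighted degree. -/
def weightSeries (A : Set (Fin 6 →₀ ℕ)) : PowerSeries ℤ :=
  PowerSeries.mk fun p => ({m | m ∈ A ∧ Finsupp.weight w6 m = p}.ncard : ℤ)

lemma mk_finrank_comp6 :
    PowerSeries.mk (fun p => (Module.finrank ℂ (comp6 p) : ℤ)) =
      weightSeries standardExponents := by
  ext p
  rw [weightSeries, PowerSeries.coeff_mk, PowerSeries.coeff_mk, ← span_standardClass,
    Module.finrank_eq_nat_card_basis (Module.Basis.span (linearIndependent_standardClass p))]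
  rfl

lemma finite_weight_eq (A : Set (Fin 6 →₀ ℕ)) (p : ℕ) :
    {m | m ∈ A ∧ Finsupp.weight w6 m = p}.Finite := by
  refine (Finsupp.finite_of_nat_weight_le w6 ?_ p).subset fun m hm => hm.2.le
  intro i
  fin_cases i <;> simp [w6]

lemma weightSeries_union {A B : Set (Fin 6 →₀ ℕ)} (h : Disjoint A B) :
    weightSeries (A ∪ B) = weightSeries A + weightSeries B := by
  ext p
  simp only [weightSeries, map_add, PowerSeries.coeff_mk]
  rw [← Nat.cast_add, ← Set.ncard_union_eq _ (finite_weight_eq A p) (finite_weight_eq B p)]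
  · congr 2
    ext m
    simp [or_and_right]
  · exact h.mono (fun _ hm => hm.1) (fun _ hm => hm.1)

lemma weightSeries_image_add_single (A : Set (Fin 6 →₀ ℕ)) (i : Fin 6) :
    weightSeries ((· + Finsupp.single i 1) '' A) =
      PowerSeries.X ^ w6 i * weightSeries A := by
  ext p
  have hw (m : Fin 6 →₀ ℕ) :
      Finsupp.weight w6 (m + Finsupp.single i 1) = Finsupp.weight w6 m + w6 i := by
    simp [Finsupp.weight_single]
  rw [PowerSeries.coeff_X_pow_mul', weightSeries, weightSeries, PowerSeries.coeff_mk]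
  split_ifs with h
  · rw [PowerSeries.coeff_mk,
      ← Set.ncard_image_of_injective {m | m ∈ A ∧ Finsupp.weight w6 m = p - w6 i}
        (add_left_injective (Finsupp.single i 1))]
    congr 2
    ext m
    constructor
    · rintro ⟨⟨n, hn, rfl⟩, hm⟩
      exact ⟨n, ⟨hn, by have := hw n; simp only at hm; omega⟩, rfl⟩
    · rintro ⟨n, ⟨hn, hm⟩, rfl⟩
      exact ⟨⟨n, hn, rfl⟩, by have := hw n; simp only; omega⟩
  · rw [Nat.cast_eq_zero, Set.ncard_eq_zero (finite_weight_eq _ p),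
      Set.eq_empty_iff_forall_notMem]
    rintro _ ⟨⟨n, hn, rfl⟩, hm⟩
    have := hw n
    simp only at hm
    omega

lemma weightSeries_singleton_zero : weightSeries {0} = 1 := by
  ext p
  rw [weightSeries, PowerSeries.coeff_mk, PowerSeries.coeff_one]
  split_ifs with h
  · have : {m : Fin 6 →₀ ℕ | m ∈ ({0} : Set _) ∧ Finsupp.weight w6 m = p} = {0} := by
      ext m
      simp only [Set.mem_ofPred_eq, Set.mem_singleton_iff, and_iff_left_iff_imp]
      rintro rfl
      simp [h]
    rw [this, Set.ncard_singleton, Nat.cast_one]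
  · rw [Nat.cast_eq_zero, Set.ncard_eq_zero (finite_weight_eq _ p),
      Set.eq_empty_iff_forall_notMem]
    rintro _ ⟨rfl, hm⟩
    exact h (by simpa using hm.symm)

lemma mem_image_add_single {A : Set (Fin 6 →₀ ℕ)} {i : Fin 6} {m : Fin 6 →₀ ℕ} :
    m ∈ (· + Finsupp.single i 1) '' A ↔ m i ≠ 0 ∧ m - Finsupp.single i 1 ∈ A := by
  constructor
  · rintro ⟨n, hn, rfl⟩
    simpa using hn
  · rintro ⟨hi, hm⟩
    exact ⟨_, hm, tsub_add_cancel_of_le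
      (Finsupp.single_le_iff.mpr (Nat.one_le_iff_ne_zero.mpr hi))⟩

/-- Splitting off the exponents divisible by the `i`-th variable. -/
lemma weightSeries_eq_add {A B C : Set (Fin 6 →₀ ℕ)} (i : Fin 6)
    (hB : ∀ m, m ∈ B ↔ m ∈ A ∧ m i = 0)
    (hC : ∀ m, m ∈ C ↔ m + Finsupp.single i 1 ∈ A) :
    weightSeries A = weightSeries B + PowerSeries.X ^ w6 i * weightSeries C := by
  rw [← weightSeries_image_add_single, ← weightSeries_union]
  · congr 1
    ext m
    rw [Set.mem_union, mem_image_add_single, hB, hC]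
    by_cases hi : m i = 0
    · simp [hi]
    · rw [tsub_add_cancel_of_le
        (Finsupp.single_le_iff.mpr (Nat.one_le_iff_ne_zero.mpr hi))]
      simp [hi]
  · rw [Set.disjoint_left]
    intro m hm hm'
    exact (mem_image_add_single.mp hm').1 ((hB m).mp hm).2

/-- The exponents supported in `s`. -/
def exponentsIn (s : Finset (Fin 6)) : Set (Fin 6 →₀ ℕ) := {m | ∀ i ∉ s, m i = 0}

lemma weightSeries_exponentsIn_insert {s : Finset (Fin 6)} {i : Fin 6} (hi : i ∉ s) :
    (1 - PowerSeries.X ^ w6 i) * weightSeries (exponentsIn (insert i s)) =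
      weightSeries (exponentsIn s) := by
  have h := weightSeries_eq_add (A := exponentsIn (insert i s)) (B := exponentsIn s)
    (C := exponentsIn (insert i s)) i ?_ ?_
  · linear_combination h
  · intro m
    simp only [exponentsIn, Set.mem_ofPred_eq, Finset.mem_insert, not_or]
    constructor
    · exact fun h => ⟨fun j hj => h j hj.2, h i hi⟩
    · rintro ⟨h, h0⟩ j hj
      by_cases hji : j = i
      · rwa [hji]
      · exact h j ⟨hji, hj⟩
  · intro m
    simp only [exponentsIn, Set.mem_ofPred_eq, Finset.mem_insert, not_or]
    refine forall_congr' fun j => forall_congr' fun hj => ?_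
    simp [Ne.symm hj.1]

lemma prod_mul_weightSeries_exponentsIn (s : Finset (Fin 6)) :
    (∏ i ∈ s, (1 - PowerSeries.X ^ w6 i)) * weightSeries (exponentsIn s) = 1 := by
  induction s using Finset.induction_on with
  | empty =>
    have h : exponentsIn ∅ = {0} := by
      ext m
      simp [exponentsIn, Finsupp.ext_iff]
    rw [h, weightSeries_singleton_zero, Finset.prod_empty, one_mul]
  | insert i s hi ih =>
    rw [← weightSeries_exponentsIn_insert hi] at ih
    rw [Finset.prod_insert hi]
    linear_combination ih

lemma weightSeries_standardExponents :
    weightSeries standardExponents =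
      (1 + PowerSeries.X ^ 2) * weightSeries (exponentsIn {0, 1, 2, 3}) +
        PowerSeries.X ^ 3 * weightSeries (exponentsIn {0, 1, 3, 5}) := by
  have h5 := weightSeries_eq_add (A := standardExponents)
    (B := {m | m 4 ≤ 1 ∧ m 5 = 0}) (C := exponentsIn {0, 1, 3, 5}) 5 ?_ ?_
  · have h4 := weightSeries_eq_add (A := {m | m 4 ≤ 1 ∧ m 5 = 0})
      (B := exponentsIn {0, 1, 2, 3}) (C := exponentsIn {0, 1, 2, 3}) 4 ?_ ?_
    · rw [h5, h4]
      simp only [w6, Matrix.cons_val]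
      ring
    all_goals
      intro m
      simp [exponentsIn, Fin.forall_fin_succ]
      try omega
  all_goals
    intro m
    simp [exponentsIn, standardExponents, Fin.forall_fin_succ]
    try omega

/-- With the grading `deg b = deg σ₁ = 1`, `deg ρ = deg σ₂ = deg τ = 2`,
`deg σ₃ = 3`, the ideal `(τ²−ρσ₂, τσ₃, ρσ₃)` is homogeneous (its generators are
homogeneous of degrees 4, 5, 5), and the Hilbert series of the graded quotient satisfies
`(1−T)(1−T²)²(1−T³) · Σ_p dim_ℂ (R/I)_p · T^p = 1 + T + 2T² + 2T³ + 2T⁴` in `ℤ[[T]]`. -/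
theorem stmt6 :
    (IsWeightedHomogeneous w6 (τ ^ 2 - ρ * σ₂) 4 ∧
      IsWeightedHomogeneous w6 (τ * σ₃) 5 ∧
      IsWeightedHomogeneous w6 (ρ * σ₃) 5) ∧
    (1 - PowerSeries.X) * (1 - PowerSeries.X ^ 2) ^ 2 * (1 - PowerSeries.X ^ 3) *
        PowerSeries.mk (fun p => (Module.finrank ℂ (comp6 p) : ℤ)) =
      1 + PowerSeries.X + 2 * PowerSeries.X ^ 2 + 2 * PowerSeries.X ^ 3
        + 2 * PowerSeries.X ^ 4 := by
  refine ⟨⟨?_, ?_, ?_⟩, ?_⟩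
  · exact ((isWeightedHomogeneous_X ℂ w6 4).pow 2).sub
      ((isWeightedHomogeneous_X ℂ w6 2).mul (isWeightedHomogeneous_X ℂ w6 3))
  · exact (isWeightedHomogeneous_X ℂ w6 4).mul (isWeightedHomogeneous_X ℂ w6 5)
  · exact (isWeightedHomogeneous_X ℂ w6 2).mul (isWeightedHomogeneous_X ℂ w6 5)
  · have hA := prod_mul_weightSeries_exponentsIn {0, 1, 2, 3}
    have hB := prod_mul_weightSeries_exponentsIn {0, 1, 3, 5}
    simp [w6] at hA hB
    have hX : (1 - PowerSeries.X : PowerSeries ℤ) ≠ 0 := by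
      intro h
      simpa using congrArg PowerSeries.constantCoeff h
    apply mul_left_cancel₀ hX
    rw [mk_finrank_comp6, weightSeries_standardExponents]
    linear_combination (1 + PowerSeries.X ^ 2) * (1 - PowerSeries.X ^ 3) * hA +
      PowerSeries.X ^ 3 * (1 - PowerSeries.X ^ 2) * hB

end
end

section
/- In R = ℂ[b,σ₁,ρ,σ₂,τ,σ₃] the following hold: (i) the ideals (ρ,τ) and (σ₃, τ²−ρσ₂) are prime; (ii) (τ²−ρσ₂, τσ₃, ρσ₃) = (ρ,τ) ∩ (σ₃, τ²−ρσ₂); (iii) (ρ,τ) + (σ₃, τ²−ρσ₂) = (ρ,τ,σ₃); (iv) consequently the quotient ring R/(τ²−ρσ₂, τσ₃, ρσ₃) is reduced. -/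
open MvPolynomial

noncomputable section

/-- An endomorphism of a polynomial ring that fixes the variables modulo `I` is the identity
modulo `I`. -/
lemma sub_aeval_mem_of_forall_X_sub_mem {ι k : Type*} [CommRing k] {I : Ideal (MvPolynomial ι k)}
    {v : ι → MvPolynomial ι k} (hv : ∀ i, X i - v i ∈ I) (p : MvPolynomial ι k) :
    p - aeval v p ∈ I := by
  have h : Ideal.Quotient.mkₐ k I = (Ideal.Quotient.mkₐ k I).comp (aeval v) := by
    ext i
    simpa using Ideal.Quotient.eq.mpr (hv i)
  exact Ideal.Quotient.eq.mp (DFunLike.congr_fun h p)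

/-- If `v` fixes the variables modulo `J`, and substituting `v` maps `J` into `Q ≤ J`, then `J` is
the contraction of `Q`. -/
lemma eq_comap_aeval {ι k : Type*} [CommRing k] {J Q : Ideal (MvPolynomial ι k)}
    {v : ι → MvPolynomial ι k} (hv : ∀ i, X i - v i ∈ J) (hJ : J ≤ Q.comap (aeval v))
    (hQ : Q ≤ J) : J = Q.comap (aeval v) :=
  le_antisymm hJ fun p hp ↦
    (J.sub_mem_iff_left (hQ hp)).mp (sub_aeval_mem_of_forall_X_sub_mem hv p)

lemma isPrime_span_rho_tau : (Ideal.span {ρ, τ}).IsPrime := by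
  rw [eq_comap_aeval (J := Ideal.span {ρ, τ}) (Q := ⊥) (v := ![X 0, X 1, 0, X 3, 0, X 5])]
  · exact Ideal.comap_isPrime _ _
  · intro i
    fin_cases i <;> simp
    · exact Ideal.subset_span (by simp [ρ])
    · exact Ideal.subset_span (by simp [τ])
  · simp [Ideal.span_le, Set.insert_subset_iff, ρ, τ]
  · exact bot_le

lemma prime_tau_sq_sub : Prime (τ ^ 2 - ρ * σ₂) := by
  have hrel : IsRelPrime (-X 3 : R6) (X 4 ^ 2) := by
    refine IsRelPrime.neg_left (IsRelPrime.pow_right ?_)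
    rw [(X_prime (R := ℂ)).irreducible.isRelPrime_iff_not_dvd]
    simp [X_dvd_X]
  have h := irreducible_mul_X_add (-X 3 : R6) (X 4 ^ 2) 2 (by simp) (by simp [vars_X])
    (fun h ↦ by simpa [vars_X] using vars_pow _ _ h) hrel
  have e : τ ^ 2 - ρ * σ₂ = -X 3 * X 2 + X 4 ^ 2 := by
    simp only [τ, ρ, σ₂]
    ring
  exact e ▸ h.prime

lemma isPrime_span_sigma_tau_sq_sub : (Ideal.span {σ₃, τ ^ 2 - ρ * σ₂}).IsPrime := by
  have : (Ideal.span {τ ^ 2 - ρ * σ₂}).IsPrime :=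
    (Ideal.span_singleton_prime prime_tau_sq_sub.ne_zero).mpr prime_tau_sq_sub
  rw [eq_comap_aeval (J := Ideal.span {σ₃, τ ^ 2 - ρ * σ₂}) (Q := Ideal.span {τ ^ 2 - ρ * σ₂})
    (v := ![X 0, X 1, X 2, X 3, X 4, 0])]
  · exact Ideal.comap_isPrime _ _
  · intro i
    fin_cases i <;> simp
    exact Ideal.subset_span (by simp [σ₃])
  · simp [Ideal.span_le, Set.insert_subset_iff, ρ, τ, σ₂, σ₃]
  · exact Ideal.span_mono (by simp)

lemma sigma_notMem_span_rho_tau : σ₃ ∉ Ideal.span {ρ, τ} := by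
  intro h
  obtain ⟨a, b, hab⟩ := Ideal.mem_span_pair.mp h
  simpa [ρ, τ, σ₃] using congrArg (eval ![0, 0, 0, 0, 0, 1]) hab

lemma span_eq_inf : Ideal.span {τ ^ 2 - ρ * σ₂, τ * σ₃, ρ * σ₃} =
    Ideal.span {ρ, τ} ⊓ Ideal.span {σ₃, τ ^ 2 - ρ * σ₂} := by
  have hf : τ ^ 2 - ρ * σ₂ ∈ Ideal.span {ρ, τ} :=
    Ideal.mem_span_pair.mpr ⟨-σ₂, τ, by ring⟩
  apply le_antisymm
  · simp only [Ideal.span_le, Set.insert_subset_iff, Set.singleton_subset_iff, SetLike.mem_coe,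
      Ideal.mem_inf]
    exact ⟨⟨hf, Ideal.subset_span (by simp)⟩,
      ⟨Ideal.mul_mem_right _ _ (Ideal.subset_span (by simp)),
        Ideal.mul_mem_left _ _ (Ideal.subset_span (by simp))⟩,
      ⟨Ideal.mul_mem_right _ _ (Ideal.subset_span (by simp)),
        Ideal.mul_mem_left _ _ (Ideal.subset_span (by simp))⟩⟩
  · rintro x ⟨hx, hx'⟩
    obtain ⟨a, c, rfl⟩ := Ideal.mem_span_pair.mp hx'
    have ha : a * σ₃ ∈ Ideal.span {ρ, τ} :=
      (Ideal.add_mem_iff_left _ (Ideal.mul_mem_left _ c hf)).mp hx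
    obtain ⟨r, s, rfl⟩ := Ideal.mem_span_pair.mp
      ((isPrime_span_rho_tau.mem_or_mem ha).resolve_right sigma_notMem_span_rho_tau)
    exact Ideal.mem_span_insert.mpr
      ⟨c, _, Ideal.mem_span_pair.mpr ⟨s, r, rfl⟩, by ring⟩

lemma span_sup_eq : Ideal.span {ρ, τ} ⊔ Ideal.span {σ₃, τ ^ 2 - ρ * σ₂} =
    Ideal.span {ρ, τ, σ₃} := by
  apply le_antisymm
  · refine sup_le (Ideal.span_mono (by grind)) ?_
    rw [Ideal.span_le, Set.insert_subset_iff, Set.singleton_subset_iff]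
    exact ⟨Ideal.subset_span (by simp), sub_mem
      (Ideal.pow_mem_of_mem _ (Ideal.subset_span (by simp)) 2 two_pos)
      (Ideal.mul_mem_right _ _ (Ideal.subset_span (by simp)))⟩
  · rw [← Ideal.span_union]
    exact Ideal.span_mono (by grind)

/-- In `R = ℂ[b,σ₁,ρ,σ₂,τ,σ₃]`:
(i) the ideals `(ρ,τ)` and `(σ₃, τ²−ρσ₂)` are prime;
(ii) `(τ²−ρσ₂, τσ₃, ρσ₃) = (ρ,τ) ∩ (σ₃, τ²−ρσ₂)`;
(iii) `(ρ,τ) + (σ₃, τ²−ρσ₂) = (ρ,τ,σ₃)`;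
(iv) consequently `R/(τ²−ρσ₂, τσ₃, ρσ₃)` is reduced. -/
theorem stmt7 :
    (Ideal.span {ρ, τ}).IsPrime ∧
    (Ideal.span {σ₃, τ ^ 2 - ρ * σ₂}).IsPrime ∧
    Ideal.span {τ ^ 2 - ρ * σ₂, τ * σ₃, ρ * σ₃} =
      Ideal.span {ρ, τ} ⊓ Ideal.span {σ₃, τ ^ 2 - ρ * σ₂} ∧
    Ideal.span {ρ, τ} ⊔ Ideal.span {σ₃, τ ^ 2 - ρ * σ₂} = Ideal.span {ρ, τ, σ₃} ∧
    IsReduced (R6 ⧸ Ideal.span {τ ^ 2 - ρ * σ₂, τ * σ₃, ρ * σ₃}) := by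
  refine ⟨isPrime_span_rho_tau, isPrime_span_sigma_tau_sq_sub, span_eq_inf, span_sup_eq, ?_⟩
  rw [← Ideal.isRadical_iff_quotient_reduced, span_eq_inf]
  exact isPrime_span_rho_tau.isRadical.inf isPrime_span_sigma_tau_sq_sub.isRadical

end
end

section
/- For every integer n ≥ 0, the image under φ of the ideal (τ²−ρσ₂, τσ₃, ρσ₃) + (the five components of G_{n+1}) of ℂ[b,σ₁,ρ,σ₂,τ,σ₃] is contained in the ideal (q₁ℓ₁, q₂ℓ₂, q₃ℓ₃) + (the four components of R_{n+1}) of P; consequently φ induces a ℂ-algebra homomorphism ℂ[b,σ₁,ρ,σ₂,τ,σ₃]/(τ²−ρσ₂, τσ₃, ρσ₃, G_{n+1}) → P/(q₁ℓ₁, q₂ℓ₂, q₃ℓ₃, R_{n+1}). -/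
open MvPolynomial

noncomputable section

def σ₁ : R6 := X 1
/-- The 5×5 matrix `A` over `ℂ[b,σ₁,ρ,σ₂,τ,σ₃]`. -/
def A5 : Matrix (Fin 5) (Fin 5) R6 :=
  !![X 0 + σ₁, 0, 9 * ρ + C (1/4 : ℂ) * (σ₂ - σ₁ ^ 2) + 3 * τ, 0, σ₃;
     0, X 0 + C (1/2 : ℂ) * σ₁, 4 * ρ + C (1/2 : ℂ) * τ, ρ, -(C (1/2 : ℂ) * σ₁ * ρ);
     1, 0, X 0, 0, 0;
     0, 1, 0, X 0, 0;
     0, 0, 1, 1, X 0]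

/-- `G₁ = (bσ₁+18ρ+(1/2)(σ₂+σ₁²)+6τ, 9ρ+τ, 2b+σ₁, b, 3)ᵀ`. -/
def G1 : Fin 5 → R6 :=
  ![X 0 * σ₁ + 18 * ρ + C (1/2 : ℂ) * (σ₂ + σ₁ ^ 2) + 6 * τ, 9 * ρ + τ, 2 * X 0 + σ₁,
    X 0, 3]

/-- `G_{n+1} = Aⁿ·G₁`. -/
def G (n : ℕ) : Fin 5 → R6 := (A5 ^ n).mulVec G1

/-- The 4×4 matrix `E` over `ℂ[b,q₁,q₂,q₃,ℓ₁,ℓ₂,ℓ₃]` (with `θ₁=q₃−q₂`, `θ₂=q₁−q₃`,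
`θ₃=q₂−q₁`). -/
def E4 : Matrix (Fin 4) (Fin 4) P7 :=
  !![X 0, X 1 * (X 1 - 5 * (X 2 + X 3)), X 2 * (X 2 - 5 * (X 1 + X 3)),
       X 3 * (X 3 - 5 * (X 1 + X 2));
     1, X 4 + X 0 + 3 * (X 3 - X 2), -X 2, X 3;
     1, X 1, X 5 + X 0 + 3 * (X 1 - X 3), -X 3;
     1, -X 1, X 2, X 6 + X 0 + 3 * (X 2 - X 1)]

/-- `R_{n+1} = Eⁿ·(b,1,1,1)ᵀ`. -/
def Rv (n : ℕ) : Fin 4 → P7 := (E4 ^ n).mulVec ![X 0, 1, 1, 1]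

/-- The ideal `(τ²−ρσ₂, τσ₃, ρσ₃, G_{n+1})` of `ℂ[b,σ₁,ρ,σ₂,τ,σ₃]`. -/
def Isrc (n : ℕ) : Ideal R6 :=
  Ideal.span ({τ ^ 2 - ρ * σ₂, τ * σ₃, ρ * σ₃} ∪ Set.range (G n))

/-- The ideal `(q₁ℓ₁, q₂ℓ₂, q₃ℓ₃, R_{n+1})` of `ℂ[b,q₁,q₂,q₃,ℓ₁,ℓ₂,ℓ₃]`. -/
def Jtgt (n : ℕ) : Ideal P7 :=
  Ideal.span ({X 1 * X 4, X 2 * X 5, X 3 * X 6} ∪ Set.range (Rv n))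

/-- The ideal `(q₁ℓ₁, q₂ℓ₂, q₃ℓ₃)` of `ℂ[b,q₁,q₂,q₃,ℓ₁,ℓ₂,ℓ₃]`. -/
def qlIdeal : Ideal P7 :=
  Ideal.span {X 1 * X 4, X 2 * X 5, X 3 * X 6}

/-- A matrix intertwining `φ(A)` and `E` modulo `(q₁ℓ₁, q₂ℓ₂, q₃ℓ₃)`. -/
def intertwiner : Matrix (Fin 5) (Fin 4) P7 :=
  !![X 4 + X 5 + X 6,
      2 * (X 1 * (X 1 - 5 * (X 2 + X 3)))
        + (X 4 + 2 * (X 3 - X 2)) * (X 4 + 3 * (X 3 - X 2))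
        + (X 5 + 2 * (X 1 - X 3)) * X 1 - (X 6 + 2 * (X 2 - X 1)) * X 1,
      2 * (X 2 * (X 2 - 5 * (X 1 + X 3)))
        + (X 5 + 2 * (X 1 - X 3)) * (X 5 + 3 * (X 1 - X 3))
        + (X 6 + 2 * (X 2 - X 1)) * X 2 - (X 4 + 2 * (X 3 - X 2)) * X 2,
      2 * (X 3 * (X 3 - 5 * (X 1 + X 2)))
        + (X 6 + 2 * (X 2 - X 1)) * (X 6 + 3 * (X 2 - X 1))
        + (X 4 + 2 * (X 3 - X 2)) * X 3 - (X 5 + 2 * (X 1 - X 3)) * X 3;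
     0,
      X 1 * (X 1 - 5 * (X 2 + X 3)) + (X 3 - X 2) * (X 4 + 3 * (X 3 - X 2))
        + (X 1 - X 3) * X 1 - (X 2 - X 1) * X 1,
      X 2 * (X 2 - 5 * (X 1 + X 3)) + (X 1 - X 3) * (X 5 + 3 * (X 1 - X 3))
        + (X 2 - X 1) * X 2 - (X 3 - X 2) * X 2,
      X 3 * (X 3 - 5 * (X 1 + X 2)) + (X 2 - X 1) * (X 6 + 3 * (X 2 - X 1))
        + (X 3 - X 2) * X 3 - (X 1 - X 3) * X 3;
     2, X 4 + 2 * (X 3 - X 2), X 5 + 2 * (X 1 - X 3), X 6 + 2 * (X 2 - X 1);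
     1, X 3 - X 2, X 1 - X 3, X 2 - X 1;
     0, 1, 1, 1]

theorem φ_X_zero : φ (X 0) = X 0 := by
  simp [φ]

theorem φ_σ₁ : φ σ₁ = X 4 + X 5 + X 6 := by
  simp [φ, σ₁]

theorem φ_ρ : φ ρ =
    X 1 ^ 2 + X 2 ^ 2 + X 3 ^ 2 - 2 * (X 1 * X 2 + X 1 * X 3 + X 2 * X 3) := by
  simp [φ, ρ]

theorem φ_σ₂ : φ σ₂ =
    X 4 ^ 2 + X 5 ^ 2 + X 6 ^ 2 - 2 * (X 4 * X 5 + X 4 * X 6 + X 5 * X 6) := by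
  simp [φ, σ₂]

theorem φ_τ : φ τ = X 4 * (X 3 - X 2) + X 5 * (X 1 - X 3) + X 6 * (X 2 - X 1) := by
  simp [φ, τ]

theorem φ_σ₃ : φ σ₃ = X 4 * X 5 * X 6 := by
  simp [φ, σ₃]

section Intertwining

variable {S : Type*} [CommRing S] {π : P7 →+* S}

theorem two_mul_map_C_half (π : P7 →+* S) : 2 * π (C (1 / 2)) = 1 := by
  rw [← map_ofNat (π.comp C) 2, RingHom.comp_apply, ← map_mul, ← C_mul]
  norm_num

theorem four_mul_map_C_quarter (π : P7 →+* S) : 4 * π (C (1 / 4)) = 1 := by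
  rw [← map_ofNat (π.comp C) 4, RingHom.comp_apply, ← map_mul, ← C_mul]
  norm_num

set_option maxHeartbeats 2000000 in
theorem A5_mul_intertwiner (h₁ : π (X 1) * π (X 4) = 0) (h₂ : π (X 2) * π (X 5) = 0)
    (h₃ : π (X 3) * π (X 6) = 0) :
    A5.map (π.comp φ.toRingHom) * intertwiner.map π = intertwiner.map π * E4.map π := by
  have hh := two_mul_map_C_half π
  have hq := four_mul_map_C_quarter π
  obtain ⟨f, hf⟩ : ∃ f, f = π.comp φ.toRingHom := ⟨_, rfl⟩
  have hX : f (X 0) = π (X 0) := by simp [hf, φ_X_zero]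
  have hC (a : ℂ) : f (C a) = π (C a) := by simp [hf]
  have hσ₁ := congrArg π φ_σ₁
  have hρ := congrArg π φ_ρ
  have hσ₂ := congrArg π φ_σ₂
  have hτ := congrArg π φ_τ
  have hσ₃ := congrArg π φ_σ₃
  have hcomp (x : R6) : π (φ x) = f x := by simp [hf]
  simp only [hcomp, map_add, map_sub, map_mul, map_pow, map_ofNat] at hσ₁ hρ hσ₂ hτ hσ₃
  rw [← hf]
  clear hcomp hf
  ext i j
  fin_cases i <;> fin_cases j <;>
    simp [A5, E4, intertwiner, Matrix.mul_apply, Fin.sum_univ_succ, -one_div, hX, hC,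
      hσ₁, hρ, hσ₂, hτ, hσ₃] <;>
    simp only [map_ofNat] <;>
    clear hX hC hσ₁ hρ hσ₂ hτ hσ₃ <;>
    generalize π (C (1 / 2)) = h, π (C (1 / 4)) = k, π (X 0) = b, π (X 1) = q₁, π (X 2) = q₂,
      π (X 3) = q₃, π (X 4) = l₁, π (X 5) = l₂, π (X 6) = l₃ at * <;>
    grind

theorem G1_eq_intertwiner_mulVec (π : P7 →+* S) :
    π.comp φ.toRingHom ∘ G1 = (intertwiner.map π).mulVec (π ∘ ![X 0, 1, 1, 1]) := by
  have hh := two_mul_map_C_half π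
  ext i
  fin_cases i <;>
    simp only [G1, intertwiner, Matrix.mulVec, dotProduct, Fin.sum_univ_succ] <;>
    simp [-one_div, φ_X_zero, φ_σ₁, φ_ρ, φ_σ₂, φ_τ] <;>
    simp only [map_ofNat] <;>
    grind

theorem G_eq_intertwiner_mulVec (h₁ : π (X 1) * π (X 4) = 0) (h₂ : π (X 2) * π (X 5) = 0)
    (h₃ : π (X 3) * π (X 6) = 0) (n : ℕ) :
    π.comp φ.toRingHom ∘ G n = (intertwiner.map π).mulVec (π ∘ Rv n) := by
  induction n with
  | zero => simpa [G, Rv] using G1_eq_intertwiner_mulVec π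
  | succ n ih =>
    have hG : G (n + 1) = A5.mulVec (G n) := by
      simp [G, pow_succ', Matrix.mulVec_mulVec]
    have hR : Rv (n + 1) = E4.mulVec (Rv n) := by
      simp [Rv, pow_succ', Matrix.mulVec_mulVec]
    have hG' : π.comp φ.toRingHom ∘ A5.mulVec (G n) =
        (A5.map (π.comp φ.toRingHom)).mulVec (π.comp φ.toRingHom ∘ G n) :=
      funext fun i => RingHom.map_mulVec _ _ _ i
    have hR' : π ∘ E4.mulVec (Rv n) = (E4.map π).mulVec (π ∘ Rv n) :=
      funext fun i => RingHom.map_mulVec _ _ _ i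
    rw [hG, hR, hG', hR', ih, Matrix.mulVec_mulVec, Matrix.mulVec_mulVec,
      A5_mul_intertwiner h₁ h₂ h₃]

theorem map_φ_relations_eq_zero (h₁ : π (X 1) * π (X 4) = 0) (h₂ : π (X 2) * π (X 5) = 0)
    (h₃ : π (X 3) * π (X 6) = 0) :
    π (φ (τ ^ 2 - ρ * σ₂)) = 0 ∧ π (φ (τ * σ₃)) = 0 ∧ π (φ (ρ * σ₃)) = 0 := by
  simp only [φ_ρ, φ_σ₂, φ_τ, φ_σ₃, map_add, map_sub, map_mul, map_pow, map_ofNat]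
  refine ⟨?_, ?_, ?_⟩ <;> grind

end Intertwining

theorem mk_qlIdeal_mul_eq_zero :
    Ideal.Quotient.mk qlIdeal (X 1) * Ideal.Quotient.mk qlIdeal (X 4) = 0 ∧
      Ideal.Quotient.mk qlIdeal (X 2) * Ideal.Quotient.mk qlIdeal (X 5) = 0 ∧
      Ideal.Quotient.mk qlIdeal (X 3) * Ideal.Quotient.mk qlIdeal (X 6) = 0 := by
  simp only [← map_mul, Ideal.Quotient.eq_zero_iff_mem]
  exact ⟨Ideal.subset_span (by simp), Ideal.subset_span (by simp), Ideal.subset_span (by simp)⟩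

theorem qlIdeal_le_Jtgt (n : ℕ) : qlIdeal ≤ Jtgt n :=
  Ideal.span_mono Set.subset_union_left

theorem φ_G_mem_Jtgt (n : ℕ) (i : Fin 5) : φ (G n i) ∈ Jtgt n := by
  obtain ⟨h₁, h₂, h₃⟩ := mk_qlIdeal_mul_eq_zero
  have h : Ideal.Quotient.mk qlIdeal (φ (G n i)) =
      Ideal.Quotient.mk qlIdeal (intertwiner.mulVec (Rv n) i) :=
    (congrFun (G_eq_intertwiner_mulVec h₁ h₂ h₃ n) i).trans
      (RingHom.map_mulVec (Ideal.Quotient.mk qlIdeal) _ _ i).symm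
  have hR : intertwiner.mulVec (Rv n) i ∈ Jtgt n := by
    simp only [Matrix.mulVec, dotProduct]
    exact Ideal.sum_mem _ fun j _ =>
      Ideal.mul_mem_left _ _ (Ideal.subset_span (Or.inr (Set.mem_range_self j)))
  simpa using add_mem (qlIdeal_le_Jtgt n (Ideal.Quotient.eq.mp h)) hR

theorem Isrc_le_comap (n : ℕ) : Isrc n ≤ (Jtgt n).comap φ := by
  obtain ⟨h₁, h₂, h₃⟩ := mk_qlIdeal_mul_eq_zero
  obtain ⟨r₁, r₂, r₃⟩ := map_φ_relations_eq_zero h₁ h₂ h₃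
  refine Ideal.span_le.mpr ?_
  rintro x ((rfl | rfl | rfl) | ⟨i, rfl⟩)
  · exact qlIdeal_le_Jtgt n (Ideal.Quotient.eq_zero_iff_mem.mp r₁)
  · exact qlIdeal_le_Jtgt n (Ideal.Quotient.eq_zero_iff_mem.mp r₂)
  · exact qlIdeal_le_Jtgt n (Ideal.Quotient.eq_zero_iff_mem.mp r₃)
  · exact φ_G_mem_Jtgt n i

/-- For every `n ≥ 0`, the image under `φ` of the ideal
`(τ²−ρσ₂, τσ₃, ρσ₃, G_{n+1})` is contained in the ideal `(q₁ℓ₁, q₂ℓ₂, q₃ℓ₃, R_{n+1})`;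
consequently `φ` induces a `ℂ`-algebra homomorphism between the quotients. -/
theorem stmt8 (n : ℕ) :
    (∀ x ∈ Isrc n, φ x ∈ Jtgt n) ∧
    ∃ ψ : (R6 ⧸ Isrc n) →ₐ[ℂ] (P7 ⧸ Jtgt n),
      ∀ x : R6, ψ (Ideal.Quotient.mk (Isrc n) x) = Ideal.Quotient.mk (Jtgt n) (φ x) := by
  exact ⟨fun x hx => Isrc_le_comap n hx,
    Ideal.quotientMapₐ (Jtgt n) φ (Isrc_le_comap n), fun x => rfl⟩

end
end

section
/- The ℂ-algebra homomorphism P → B/I sending b ↦ b, q_i ↦ q_i, ℓ_i ↦ ℓ̂_i is surjective, and its kernel is the ideal (q₁ℓ₁, q₂ℓ₂, q₃ℓ₃) + (the four components of R_{n+1}) of P; that is, it induces an isomorphism of ℂ-algebras P/(q₁ℓ₁, q₂ℓ₂, q₃ℓ₃, R_{n+1}) ≅ B/I. -/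
open MvPolynomial

noncomputable section

/-! We write `n = m + 2` (so that `n ≥ 2` ranges over all allowed values as `m` ranges
over `ℕ`).  The polynomial ring `B` in `4n` variables has index type
`Fin 4 ⊕ (Fin (m+1) × Fin 4)`: `Sum.inl 0 = b`, `Sum.inl (i+1) = qᵢ` (`i = 1,2,3`), and
`Sum.inr (k, j)` is the `j`-th component of `r̂_{k+2}` (component `0` being `b_{k+2}`,
components `1,2,3` being `r_{k+2,1}, r_{k+2,2}, r_{k+2,3}`). -/

/-- The polynomial ring `B = ℂ[b, q₁,q₂,q₃, b₂,…,b_n, (r_{ν,i})]` in `4n` variables,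
`n = m + 2`. -/
abbrev B (m : ℕ) : Type := MvPolynomial (Fin 4 ⊕ (Fin (m + 1) × Fin 4)) ℂ

variable (m : ℕ)

/-- The variable `b`. -/
def bB : B m := X (Sum.inl 0)

/-- The variables `q₁, q₂, q₃` (indexed by `Fin 3`). -/
def qB (i : Fin 3) : B m := X (Sum.inl i.succ)

/-- The vector `r̂_{k+2} = (b_{k+2}, r_{k+2,1}, r_{k+2,2}, r_{k+2,3})ᵀ` of variables. -/
def rhat (k : Fin (m + 1)) (j : Fin 4) : B m := X (Sum.inr (k, j))

/-- `θ₁ = q₃−q₂`, `θ₂ = q₁−q₃`, `θ₃ = q₂−q₁`. -/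
def θB : Fin 3 → B m := ![qB m 2 - qB m 1, qB m 0 - qB m 2, qB m 1 - qB m 0]

/-- `ℓ̂ᵢ = r_{2,i} − 2b − 4θᵢ`. -/
def lhat (i : Fin 3) : B m := rhat m 0 i.succ - 2 * bB m - 4 * θB m i

/-- The 4×4 matrix `Ê` over `B`. -/
def Ehat : Matrix (Fin 4) (Fin 4) (B m) :=
  !![bB m, qB m 0 * (qB m 0 - 5 * (qB m 1 + qB m 2)),
       qB m 1 * (qB m 1 - 5 * (qB m 0 + qB m 2)),
       qB m 2 * (qB m 2 - 5 * (qB m 0 + qB m 1));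
     1, lhat m 0 + bB m + 3 * θB m 0, -qB m 1, qB m 2;
     1, qB m 0, lhat m 1 + bB m + 3 * θB m 1, -qB m 2;
     1, -qB m 0, qB m 1, lhat m 2 + bB m + 3 * θB m 2]

/-- `r̂₁ = (b,1,1,1)ᵀ`. -/
def r1hat : Fin 4 → B m := ![bB m, 1, 1, 1]

/-- The correction vector `(0, q₁ℓ̂₁, q₂ℓ̂₂, q₃ℓ̂₃)ᵀ`. -/
def extra : Fin 4 → B m := ![0, qB m 0 * lhat m 0, qB m 1 * lhat m 1, qB m 2 * lhat m 2]

/-- The ideal `I ⊆ B` generated by the four components of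
`r̂₂ − Ê·r̂₁ + (0, q₁ℓ̂₁, q₂ℓ̂₂, q₃ℓ̂₃)ᵀ`, the four components of `r̂_{ν+1} − Ê·r̂_ν` for
`2 ≤ ν ≤ n−1`, and the four components of `Ê·r̂_n`. -/
def IB : Ideal (B m) :=
  Ideal.span
    ((Set.range fun j : Fin 4 =>
        rhat m 0 j - (Ehat m).mulVec (r1hat m) j + extra m j) ∪
      (Set.range fun p : Fin m × Fin 4 =>
        rhat m p.1.succ p.2 - (Ehat m).mulVec (rhat m p.1.castSucc) p.2) ∪
      (Set.range fun j : Fin 4 => (Ehat m).mulVec (rhat m (Fin.last m)) j))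

/-- The `ℂ`-algebra homomorphism `P → B/I` sending `b ↦ b`, `qᵢ ↦ qᵢ`, `ℓᵢ ↦ ℓ̂ᵢ`. -/
def ψ : P7 →ₐ[ℂ] (B m ⧸ IB m) :=
  aeval ![Ideal.Quotient.mk (IB m) (bB m),
    Ideal.Quotient.mk (IB m) (qB m 0), Ideal.Quotient.mk (IB m) (qB m 1),
    Ideal.Quotient.mk (IB m) (qB m 2),
    Ideal.Quotient.mk (IB m) (lhat m 0), Ideal.Quotient.mk (IB m) (lhat m 1),
    Ideal.Quotient.mk (IB m) (lhat m 2)]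

/-- The lift `P → B` of `ψ`, sending `b ↦ b`, `qᵢ ↦ qᵢ`, `ℓᵢ ↦ ℓ̂ᵢ`. -/
def liftPB : P7 →ₐ[ℂ] B m :=
  aeval ![bB m, qB m 0, qB m 1, qB m 2, lhat m 0, lhat m 1, lhat m 2]

/-- The map `B → P` fixing `b` and the `qᵢ` and sending `r̂_ν` to `R_ν = E^{ν-1}·(b,1,1,1)ᵀ`. -/
def evalBP : B m →ₐ[ℂ] P7 :=
  aeval (Sum.elim ![X 0, X 1, X 2, X 3] fun p => Rv (p.1 + 1) p.2)

lemma mk_liftPB (p : P7) : Ideal.Quotient.mk (IB m) (liftPB m p) = ψ m p := by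
  have h : (Ideal.Quotient.mkₐ ℂ (IB m)).comp (liftPB m) = ψ m := by
    ext i
    fin_cases i <;> simp [liftPB, ψ]
  exact DFunLike.congr_fun h p

lemma Rv_zero : Rv 0 = ![X 0, 1, 1, 1] := by
  simp [Rv]

lemma Rv_succ (n : ℕ) : Rv (n + 1) = E4.mulVec (Rv n) := by
  simp [Rv, pow_succ']

lemma Rv_one_succ (i : Fin 3) :
    Rv 1 i.succ = ![X 4 + 2 * X 0 + 4 * (X 3 - X 2), X 5 + 2 * X 0 + 4 * (X 1 - X 3),
      X 6 + 2 * X 0 + 4 * (X 2 - X 1)] i := by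
  rw [Rv_succ, Rv_zero]
  fin_cases i <;> simp [E4, Matrix.mulVec, dotProduct, Fin.sum_univ_four] <;> ring

lemma evalBP_bB : evalBP m (bB m) = X 0 := by
  simp [evalBP, bB]

lemma evalBP_qB (i : Fin 3) : evalBP m (qB m i) = ![X 1, X 2, X 3] i := by
  fin_cases i <;> simp [evalBP, qB]

lemma evalBP_rhat (k : Fin (m + 1)) (j : Fin 4) :
    evalBP m (rhat m k j) = Rv (k + 1) j := by
  simp [evalBP, rhat]

lemma evalBP_lhat (i : Fin 3) : evalBP m (lhat m i) = ![X 4, X 5, X 6] i := by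
  simp only [lhat, map_sub, map_mul, evalBP_rhat, evalBP_bB, Fin.val_zero, zero_add,
    Rv_one_succ, map_ofNat]
  fin_cases i <;> simp [θB, evalBP_qB] <;> ring

lemma evalBP_Ehat (i j : Fin 4) : evalBP m (Ehat m i j) = E4 i j := by
  fin_cases i <;> fin_cases j <;> simp [map_ofNat, Ehat, E4, θB, evalBP_qB, evalBP_lhat, evalBP_bB]

lemma evalBP_mulVec (v : Fin 4 → B m) (j : Fin 4) :
    evalBP m ((Ehat m).mulVec v j) = E4.mulVec (fun i => evalBP m (v i)) j := by
  simp [Matrix.mulVec, dotProduct, evalBP_Ehat]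

lemma evalBP_r1hat : (fun i => evalBP m (r1hat m i)) = Rv 0 := by
  ext1 i
  rw [Rv_zero]
  fin_cases i <;> simp [r1hat, evalBP_bB]

lemma evalBP_liftPB (p : P7) : evalBP m (liftPB m p) = p := by
  have h : (evalBP m).comp (liftPB m) = AlgHom.id ℂ P7 := by
    ext1 i
    fin_cases i <;> simp [liftPB, evalBP_bB, evalBP_qB, evalBP_lhat]
  exact DFunLike.congr_fun h p

lemma IB_le_comap_evalBP :
    IB m ≤ (Ideal.span ({X 1 * X 4, X 2 * X 5, X 3 * X 6} ∪
      Set.range (Rv (m + 2)))).comap (evalBP m) := by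
  rw [IB, Ideal.span_le]
  rintro _ ((⟨j, rfl⟩ | ⟨⟨k, j⟩, rfl⟩) | ⟨j, rfl⟩)
  · simp only [SetLike.mem_coe, Ideal.mem_comap, map_add, map_sub, evalBP_rhat, evalBP_mulVec,
      evalBP_r1hat, Fin.val_zero, ← Rv_succ, sub_self, zero_add]
    fin_cases j
    · simp [extra]
    all_goals
      apply Ideal.subset_span
      simp [extra, evalBP_qB, evalBP_lhat]
  · simp [evalBP_rhat, evalBP_mulVec, ← Rv_succ]
  · simp only [SetLike.mem_coe, Ideal.mem_comap, evalBP_mulVec, evalBP_rhat, Fin.val_last,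
      ← Rv_succ]
    exact Ideal.subset_span (Or.inr ⟨j, rfl⟩)

lemma liftPB_E4 (i j : Fin 4) : liftPB m (E4 i j) = Ehat m i j := by
  fin_cases i <;> fin_cases j <;> simp [map_ofNat, Ehat, E4, θB, liftPB]

lemma liftPB_Rv_zero : (fun i => liftPB m (Rv 0 i)) = r1hat m := by
  ext1 i
  rw [Rv_zero]
  fin_cases i <;> simp [r1hat, liftPB]

lemma liftPB_Rv_succ (n : ℕ) (j : Fin 4) :
    liftPB m (Rv (n + 1) j) = (Ehat m).mulVec (fun i => liftPB m (Rv n i)) j := by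
  simp [Rv_succ, Matrix.mulVec, dotProduct, liftPB_E4]

lemma mk_mulVec_congr {v w : Fin 4 → B m}
    (h : ∀ i, Ideal.Quotient.mk (IB m) (v i) = Ideal.Quotient.mk (IB m) (w i)) (j : Fin 4) :
    Ideal.Quotient.mk (IB m) ((Ehat m).mulVec v j) =
      Ideal.Quotient.mk (IB m) ((Ehat m).mulVec w j) := by
  simp [Matrix.mulVec, dotProduct, h]

lemma rhat_zero_succ (i : Fin 3) :
    rhat m 0 i.succ = (Ehat m).mulVec (r1hat m) i.succ := by
  fin_cases i <;>
    simp [Ehat, r1hat, lhat, θB, Matrix.mulVec, dotProduct, Fin.sum_univ_four] <;> ring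

lemma rhat_zero_sub_add_extra_mem (j : Fin 4) :
    rhat m 0 j - (Ehat m).mulVec (r1hat m) j + extra m j ∈ IB m :=
  Ideal.subset_span (Or.inl (Or.inl ⟨j, rfl⟩))

lemma extra_mem (j : Fin 4) : extra m j ∈ IB m := by
  refine Fin.cases ?_ (fun i => ?_) j
  · simp [extra]
  · simpa [rhat_zero_succ] using rhat_zero_sub_add_extra_mem m i.succ

lemma mk_liftPB_Rv (k : Fin (m + 1)) (j : Fin 4) :
    Ideal.Quotient.mk (IB m) (liftPB m (Rv (k + 1) j)) =
      Ideal.Quotient.mk (IB m) (rhat m k j) := by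
  induction k using Fin.induction generalizing j with
  | zero =>
    rw [liftPB_Rv_succ, Fin.val_zero, liftPB_Rv_zero, eq_comm, Ideal.Quotient.eq]
    simpa using sub_mem (rhat_zero_sub_add_extra_mem m j) (extra_mem m j)
  | succ k ih =>
    rw [liftPB_Rv_succ, Fin.val_succ]
    refine (mk_mulVec_congr m ih j).trans ?_
    rw [eq_comm, Ideal.Quotient.eq]
    exact Ideal.subset_span (Or.inl (Or.inr ⟨(k, j), rfl⟩))

lemma ψ_surjective : Function.Surjective (ψ m) := by
  rw [← AlgHom.range_eq_top, eq_top_iff]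
  rintro x -
  obtain ⟨p, rfl⟩ := Ideal.Quotient.mk_surjective x
  induction p using MvPolynomial.induction_on with
  | C a => exact (ψ m).range.algebraMap_mem a
  | add p q hp hq => simpa using add_mem hp hq
  | mul_X p i hp =>
    rw [map_mul]
    refine mul_mem hp ?_
    rcases i with i | ⟨k, j⟩
    · refine ⟨X (i.castLE (by decide)), ?_⟩
      fin_cases i <;> simp [ψ, bB, qB]
    · exact ⟨Rv (k + 1) j, (mk_liftPB m _).symm.trans (mk_liftPB_Rv m k j)⟩

lemma span_le_ker_ψ :
    Ideal.span ({X 1 * X 4, X 2 * X 5, X 3 * X 6} ∪ Set.range (Rv (m + 2))) ≤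
      RingHom.ker (ψ m) := by
  rw [Ideal.span_le]
  rintro _ ((rfl | rfl | rfl) | ⟨j, rfl⟩) <;>
    rw [SetLike.mem_coe, RingHom.mem_ker, ← mk_liftPB, Ideal.Quotient.eq_zero_iff_mem]
  · simpa [liftPB, extra] using extra_mem m 1
  · simpa [liftPB, extra] using extra_mem m 2
  · simpa [liftPB, extra] using extra_mem m 3
  · rw [← Ideal.Quotient.eq_zero_iff_mem, liftPB_Rv_succ]
    refine (mk_mulVec_congr m (mk_liftPB_Rv m (Fin.last m)) j).trans ?_
    rw [Ideal.Quotient.eq_zero_iff_mem]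
    exact Ideal.subset_span (Or.inr ⟨j, rfl⟩)

/-- For `n = m + 2 ≥ 2`, the `ℂ`-algebra homomorphism `P → B/I`
(`b ↦ b`, `qᵢ ↦ qᵢ`, `ℓᵢ ↦ ℓ̂ᵢ`) is surjective and its kernel is the ideal
`(q₁ℓ₁, q₂ℓ₂, q₃ℓ₃, R_{n+1})`; that is, it induces an isomorphism
`P/(q₁ℓ₁, q₂ℓ₂, q₃ℓ₃, R_{n+1}) ≅ B/I`. -/
theorem stmt9 (m : ℕ) :
    Function.Surjective (ψ m) ∧
    RingHom.ker (ψ m) =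
      Ideal.span ({X 1 * X 4, X 2 * X 5, X 3 * X 6} ∪ Set.range (Rv (m + 2))) := by
  refine ⟨ψ_surjective m, le_antisymm (fun p hp => ?_) (span_le_ker_ψ m)⟩
  rw [RingHom.mem_ker, ← mk_liftPB, Ideal.Quotient.eq_zero_iff_mem] at hp
  simpa [evalBP_liftPB] using IB_le_comap_evalBP m hp

end
end
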